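/- Let N ≥ 2, let p, q ∈ ℂ^N with q_N := q_0, let ω_k = 2 sin(kπ/N), and for 1 ≤ k ≤ N−1 set ξ_k = (p̂_k + iω_k q̂_k)/√(2ω_k) and η_k = (p̂_{N−k} − iω_k q̂_{N−k})/√(2ω_k). Then (1/6) Σ_{j=0}^{N−1} (q_j − q_{j+1})³ = (1/(12√(2N))) [ Σ' (−1)^{(k₁+k₂+k₃)/N} √(ω_{k₁} ω_{k₂} ω_{k₃}) ( ξ_{k₁}ξ_{k₂}ξ_{k₃} + η_{k₁}η_{k₂}η_{k₃} ) + 3 Σ'' (−1)^{(k₁+k₂−k₃)/N} √(ω_{k₁} ω_{k₂} ω_{k₃}) ( ξ_{k₁}ξ_{k₂}η_{k₃} + η_{k₁}η_{k₂}ξ_{k₃} ) ], where Σ' runs over 1 ≤ k₁,k₂,k₃ ≤ N−1 with k₁+k₂+k₃ ≡ 0 (mod N) and Σ'' runs over 1 ≤ k₁,k₂,k₃ ≤ N−1 with k₁+k₂−k₃ ≡ 0 (mod N) (in both cases the exponent of −1 is the integer (k₁+k₂±k₃)/N). -/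

import Mathlib

open scoped BigOperators

/-- Discrete Fourier transform of `u ∈ ℂ^N`, extended `N`-periodically in `k ∈ ℤ`. -/
noncomputable def dft (N : ℕ) (u : ℕ → ℂ) (k : ℤ) : ℂ :=
  (1 / (Real.sqrt N : ℂ)) * ∑ j ∈ Finset.range N,
    u j * Complex.exp (2 * Real.pi * Complex.I * j * k / N)

/-- The linear frequencies `ω_k = 2 sin(kπ/N)`. -/
noncomputable def om (N k : ℕ) : ℝ := 2 * Real.sin ((k : ℝ) * Real.pi / N)

/-!
The characters `χ_m(j) = e^{-πim(2j+1)/N}` live on the bonds `(j, j+1)` of the chain rather than on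
its sites, and `i ω_k χ_k(j) = e^{-2πijk/N} - e^{-2πi(j+1)k/N}`. Fourier inversion therefore gives
`√N (q_j - q_{j+1}) = ∑ i ω_k q̂_k χ_k(j)`, and since `χ_{k-N} = -χ_k` the terms in `p̂` cancel from
`∑ √ω_k ξ_k χ_k(j) + ∑ √ω_k η_k χ_{-k}(j)`, which equals `√(2N) (q_j - q_{j+1})`. Now cube and sum
over `j`: products of characters are characters, and `∑_j χ_m(j)` is `N (-1)^{m/N}` if `N ∣ m` and
`0` otherwise. This value is even in `m`, so two products exchanged by `ξ ↔ η` have the same weight.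
-/

section FourierInversion

open Finset Complex
open scoped Real ZMod

variable {N : ℕ} [NeZero N]

lemma sum_range_natCast_zmod {M : Type*} [AddCommMonoid M] (f : ZMod N → M) :
    ∑ j ∈ range N, f j = ∑ x, f x :=
  sum_nbij' (fun j ↦ (j : ZMod N)) ZMod.val (fun _ _ ↦ mem_univ _)
    (fun x _ ↦ mem_range.mpr x.val_lt)
    (fun _ hj ↦ ZMod.val_cast_of_lt (mem_range.mp hj)) (fun x _ ↦ ZMod.natCast_zmod_val x)
    (fun _ _ ↦ rfl)

lemma dft_eq_zmodDFT (u : ℕ → ℂ) (k : ℤ) :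
    dft N u k = 1 / (√N : ℂ) * ZMod.dft (fun x : ZMod N ↦ u x.val) (-k) := by
  rw [dft, ZMod.dft_apply, ← sum_range_natCast_zmod]
  congr 1
  refine sum_congr rfl fun j hj ↦ ?_
  have hchar := ZMod.stdAddChar_coe (N := N) (j * k)
  push_cast at hchar
  rw [mul_neg, neg_neg, hchar, ZMod.val_cast_of_lt (mem_range.mp hj), smul_eq_mul, mul_comm,
    mul_assoc _ (j : ℂ)]

lemma sum_dft_mul_exp (u : ℕ → ℂ) (j : ℕ) :
    ∑ k ∈ range N, dft N u k * exp (-(2 * π * I * j * k / N)) = √N * u (j % N) := by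
  have hsum : ∑ k ∈ range N, dft N u k * exp (-(2 * π * I * j * k / N)) =
      1 / (√N : ℂ) * ZMod.dft (fun x ↦ ZMod.dft (fun y : ZMod N ↦ u y.val) (-x)) j := by
    rw [ZMod.dft_apply, ← sum_range_natCast_zmod, mul_sum]
    refine sum_congr rfl fun k _ ↦ ?_
    have hchar := ZMod.stdAddChar_coe (N := N) (-(k * j))
    push_cast at hchar
    rw [dft_eq_zmodDFT, Int.cast_natCast, hchar, smul_eq_mul]
    ring_nf
  have hsqrt : (√N : ℂ) * √N = N := mod_cast Real.mul_self_sqrt N.cast_nonneg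
  have hsqrt_ne : (√N : ℂ) ≠ 0 := left_ne_zero_of_mul (hsqrt ▸ NeZero.ne (N : ℂ))
  rw [hsum, ZMod.dft_comp_neg, ZMod.dft_dft]
  simp only [neg_neg, smul_eq_mul, ZMod.val_natCast, ← hsqrt]
  field_simp

end FourierInversion

section BondCharacters

open Finset Complex
open scoped Real

/-- The character `χ_m(j) = e^{-πim(2j+1)/N}` of frequency `m`, evaluated at the midpoint of the
bond between the sites `j` and `j + 1`. It is `2N`-periodic, not `N`-periodic, in `m`. -/
noncomputable def bondChar (N : ℕ) (m : ℤ) (j : ℕ) : ℂ :=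
  exp (-(π * I * m * (2 * j + 1) / N))

lemma bondChar_add (N : ℕ) (m n : ℤ) (j : ℕ) :
    bondChar N (m + n) j = bondChar N m j * bondChar N n j := by
  simp only [bondChar, ← exp_add]
  push_cast
  ring_nf

lemma exp_neg_pi_mul_I_mul_int (c : ℤ) : exp (-(π * I * c)) = (-1) ^ c := by
  rw [show -(π * I * c) = c * -(π * I) by ring, exp_int_mul, exp_neg, exp_pi_mul_I, inv_neg_one]

lemma I_mul_om_mul_bondChar (N k j : ℕ) :
    I * om N k * bondChar N k j =
      exp (-(2 * π * I * j * k / N)) - exp (-(2 * π * I * (j + 1 : ℕ) * k / N)) := by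
  have hleft : exp (-(2 * π * I * j * k / N)) = exp (k * π / N * I) * bondChar N k j := by
    rw [bondChar, ← exp_add]
    push_cast
    ring_nf
  have hright : exp (-(2 * π * I * (j + 1 : ℕ) * k / N)) =
      exp (-(k * π / N) * I) * bondChar N k j := by
    rw [bondChar, ← exp_add]
    push_cast
    ring_nf
  have hom : (om N k : ℂ) = (exp (-(k * π / N) * I) - exp (k * π / N * I)) * I := by
    rw [om, ← two_sin]
    push_cast
    rfl
  rw [hleft, hright, hom]
  linear_combination (exp (-(k * π / N) * I) - exp (k * π / N * I)) * bondChar N k j * I_mul_I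

variable {N : ℕ} [NeZero N]

lemma bondChar_sub_self (m : ℤ) (j : ℕ) : bondChar N (m - N) j = -bondChar N m j := by
  have hN : (N : ℂ) ≠ 0 := NeZero.ne _
  have hperiod : bondChar N (-N) j = -1 := by
    have hodd : Odd (-(2 * j + 1) : ℤ) := (odd_two_mul_add_one (j : ℤ)).neg
    rw [← hodd.neg_one_zpow, ← exp_neg_pi_mul_I_mul_int, bondChar]
    push_cast
    field_simp
  rw [sub_eq_add_neg, bondChar_add, hperiod, mul_neg_one]

lemma bondChar_eq_mul_stdAddChar (m : ℤ) (j : ℕ) :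
    bondChar N m j = exp (-(π * I * m / N)) * ZMod.stdAddChar (j * (-m : ℤ) : ZMod N) := by
  have hchar := ZMod.stdAddChar_coe (N := N) (j * -m)
  push_cast at hchar ⊢
  rw [hchar, bondChar, ← exp_add]
  ring_nf

lemma sum_bondChar (m : ℤ) :
    ∑ j ∈ range N, bondChar N m j = if m % N = 0 then (N : ℂ) * (-1) ^ (m / (N : ℤ)) else 0 := by
  have hN : (N : ℂ) ≠ 0 := NeZero.ne _
  simp_rw [bondChar_eq_mul_stdAddChar, ← mul_sum]
  rw [sum_range_natCast_zmod (fun x ↦ ZMod.stdAddChar (x * ((-m : ℤ) : ZMod N))),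
    AddChar.sum_mulShift _ (ZMod.isPrimitive_stdAddChar N), ZMod.card]
  simp only [ZMod.intCast_zmod_eq_zero_iff_dvd, dvd_neg, ← Int.dvd_iff_emod_eq_zero]
  split_ifs with hdvd
  · obtain ⟨c, rfl⟩ := hdvd
    rw [Int.mul_ediv_cancel_left _ (NeZero.ne _), ← exp_neg_pi_mul_I_mul_int, mul_comm]
    push_cast
    field_simp
  · simp

lemma sum_bondChar_neg (m : ℤ) :
    ∑ j ∈ range N, bondChar N (-m) j = ∑ j ∈ range N, bondChar N m j := by
  simp only [sum_bondChar, ← Int.dvd_iff_emod_eq_zero, dvd_neg]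
  split_ifs with hdvd
  · rw [Int.neg_ediv_of_dvd hdvd, zpow_neg, ← inv_zpow, inv_neg_one]
  · rfl

end BondCharacters

section BondPolynomials

open Finset

variable {ι : Type*}

/-- The trigonometric polynomial `∑_{k ∈ S} a_k χ_{κ(k)}` in the bond characters, whose mode `k` has
frequency `κ k` and amplitude `a k`. -/
noncomputable def bondPoly (N : ℕ) (S : Finset ι) (κ : ι → ℤ) (a : ι → ℂ) (j : ℕ) : ℂ :=
  ∑ k ∈ S, a k * bondChar N (κ k) j

lemma sum_bondPoly_mul_mul (N : ℕ) (S : Finset ι) (κ₁ κ₂ κ₃ : ι → ℤ) (a₁ a₂ a₃ : ι → ℂ) :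
    ∑ j ∈ range N, bondPoly N S κ₁ a₁ j * bondPoly N S κ₂ a₂ j * bondPoly N S κ₃ a₃ j =
      ∑ k₁ ∈ S, ∑ k₂ ∈ S, ∑ k₃ ∈ S, a₁ k₁ * a₂ k₂ * a₃ k₃ *
        ∑ j ∈ range N, bondChar N (κ₁ k₁ + κ₂ k₂ + κ₃ k₃) j := by
  have hproduct (j : ℕ) :
      bondPoly N S κ₁ a₁ j * bondPoly N S κ₂ a₂ j * bondPoly N S κ₃ a₃ j =
        ∑ k₁ ∈ S, ∑ k₂ ∈ S, ∑ k₃ ∈ S, a₁ k₁ * a₂ k₂ * a₃ k₃ *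
          bondChar N (κ₁ k₁ + κ₂ k₂ + κ₃ k₃) j := by
    simp_rw [mul_assoc (bondPoly N S κ₁ a₁ j), bondPoly, sum_mul_sum, mul_sum, bondChar_add]
    refine sum_congr rfl fun k₁ _ ↦ sum_congr rfl fun k₂ _ ↦ sum_congr rfl fun k₃ _ ↦ ?_
    ring
  simp_rw [hproduct, mul_sum]
  rw [sum_comm]
  refine sum_congr rfl fun k₁ _ ↦ ?_
  rw [sum_comm]
  exact sum_congr rfl fun k₂ _ ↦ sum_comm

lemma sum_bondPoly_mul_mul_add_neg {N : ℕ} [NeZero N] (S : Finset ι) (κ₁ κ₂ κ₃ : ι → ℤ)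
    (a₁ a₂ a₃ b₁ b₂ b₃ : ι → ℂ) :
    ∑ j ∈ range N, (bondPoly N S κ₁ a₁ j * bondPoly N S κ₂ a₂ j * bondPoly N S κ₃ a₃ j +
        bondPoly N S (-κ₁) b₁ j * bondPoly N S (-κ₂) b₂ j * bondPoly N S (-κ₃) b₃ j) =
      N * ∑ k₁ ∈ S, ∑ k₂ ∈ S, ∑ k₃ ∈ S,
        if (κ₁ k₁ + κ₂ k₂ + κ₃ k₃) % (N : ℤ) = 0 then
          (-1 : ℂ) ^ ((κ₁ k₁ + κ₂ k₂ + κ₃ k₃) / (N : ℤ)) *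
            (a₁ k₁ * a₂ k₂ * a₃ k₃ + b₁ k₁ * b₂ k₂ * b₃ k₃)
        else 0 := by
  rw [sum_add_distrib, sum_bondPoly_mul_mul, sum_bondPoly_mul_mul]
  simp_rw [← sum_add_distrib, mul_sum (s := S), Pi.neg_apply, ← neg_add, sum_bondChar_neg,
    sum_bondChar]
  refine sum_congr rfl fun k₁ _ ↦ sum_congr rfl fun k₂ _ ↦ sum_congr rfl fun k₃ _ ↦ ?_
  split_ifs <;> ring

lemma sum_bondPoly_add_bondPoly_neg_cube {N : ℕ} [NeZero N] (S : Finset ι) (κ : ι → ℤ)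
    (a b : ι → ℂ) :
    ∑ j ∈ range N, (bondPoly N S κ a j + bondPoly N S (-κ) b j) ^ 3 =
      N * ((∑ k₁ ∈ S, ∑ k₂ ∈ S, ∑ k₃ ∈ S,
          if (κ k₁ + κ k₂ + κ k₃) % (N : ℤ) = 0 then
            (-1 : ℂ) ^ ((κ k₁ + κ k₂ + κ k₃) / (N : ℤ)) *
              (a k₁ * a k₂ * a k₃ + b k₁ * b k₂ * b k₃)
          else 0) +
        3 * ∑ k₁ ∈ S, ∑ k₂ ∈ S, ∑ k₃ ∈ S,
          if (κ k₁ + κ k₂ - κ k₃) % (N : ℤ) = 0 then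
            (-1 : ℂ) ^ ((κ k₁ + κ k₂ - κ k₃) / (N : ℤ)) *
              (a k₁ * a k₂ * b k₃ + b k₁ * b k₂ * a k₃)
          else 0) := by
  have hpure := sum_bondPoly_mul_mul_add_neg (N := N) S κ κ κ a a a b b b
  have hmixed := sum_bondPoly_mul_mul_add_neg (N := N) S κ κ (-κ) a a b b b a
  simp only [neg_neg, Pi.neg_apply, ← sub_eq_add_neg] at hmixed
  rw [mul_add, ← hpure, mul_left_comm, ← hmixed, mul_sum, ← sum_add_distrib]
  refine sum_congr rfl fun j _ ↦ ?_
  ring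

lemma bondPoly_neg_natCast_Icc {N : ℕ} [NeZero N] (b : ℕ → ℂ) (j : ℕ) :
    bondPoly N (Icc 1 (N - 1)) (-fun k : ℕ ↦ (k : ℤ)) b j =
      -bondPoly N (Icc 1 (N - 1)) (fun k ↦ k) (fun k ↦ b (N - k)) j := by
  rw [bondPoly, bondPoly, ← sum_neg_distrib]
  refine sum_nbij' (N - ·) (N - ·) (by grind) (by grind) (by grind) (by grind) fun k hk ↦ ?_
  obtain ⟨-, hkN⟩ := mem_Icc.mp hk
  rw [Pi.neg_apply, show N - (N - k) = k by omega, show ((N - k : ℕ) : ℤ) = -k + N by omega,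
    ← mul_neg, ← bondChar_sub_self, add_sub_cancel_right]

end BondPolynomials

section NormalModes

open Finset Complex

lemma om_pos {N k : ℕ} (hk : k ∈ Icc 1 (N - 1)) : 0 < om N k := by
  obtain ⟨hk_pos, hkN⟩ : 0 < k ∧ k < N := by grind
  have hN : (0 : ℝ) < N := mod_cast hk_pos.trans hkN
  refine mul_pos two_pos (Real.sin_pos_of_pos_of_lt_pi (by positivity) ?_)
  rw [div_lt_iff₀ hN, mul_comm]
  gcongr

lemma sqrt_two_mul_sqrt_mul_div {w : ℝ} (hw : 0 < w) (z : ℂ) :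
    (√2 : ℂ) * (√w * (z / √(2 * w))) = z := by
  rw [Real.sqrt_mul zero_le_two, ofReal_mul]
  have hw_ne : (√w : ℂ) ≠ 0 := mod_cast (Real.sqrt_pos.mpr hw).ne'
  have htwo_ne : (√2 : ℂ) ≠ 0 := mod_cast (Real.sqrt_pos.mpr two_pos).ne'
  field_simp

variable {N : ℕ} [NeZero N]

lemma om_sub {k : ℕ} (hk : k ≤ N) : om N (N - k) = om N k := by
  have hN : (N : ℝ) ≠ 0 := NeZero.ne _
  rw [om, om, Nat.cast_sub hk, sub_mul, sub_div, mul_div_cancel_left₀ _ hN, Real.sin_pi_sub]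

lemma bondPoly_I_mul_om_mul_dft (q : ℕ → ℂ) {j : ℕ} (hj : j < N) :
    bondPoly N (Icc 1 (N - 1)) (fun k ↦ k) (fun k ↦ I * om N k * dft N q k) j =
      √N * (q j - q ((j + 1) % N)) := by
  have hterm (k : ℕ) : I * om N k * dft N q k * bondChar N k j =
      dft N q k * exp (-(2 * Real.pi * I * j * k / N)) -
        dft N q k * exp (-(2 * Real.pi * I * (j + 1 : ℕ) * k / N)) := by
    linear_combination dft N q k * I_mul_om_mul_bondChar N k j
  have hrange : range N = insert 0 (Icc 1 (N - 1)) := by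
    have := NeZero.pos N
    grind
  have hzero : I * om N 0 * dft N q (0 : ℕ) * bondChar N (0 : ℕ) j = 0 := by simp [om]
  calc bondPoly N (Icc 1 (N - 1)) (fun k ↦ k) (fun k ↦ I * om N k * dft N q k) j
      = ∑ k ∈ range N, I * om N k * dft N q k * bondChar N k j := by
        rw [hrange, sum_insert (by simp), hzero, zero_add, bondPoly]
    _ = √N * (q j - q ((j + 1) % N)) := by
        simp_rw [hterm, sum_sub_distrib, sum_dft_mul_exp, Nat.mod_eq_of_lt hj, mul_sub]

lemma bondPoly_add_bondPoly_neg_eq_sqrt_mul_sub {p q ξ η : ℕ → ℂ}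
    (hξ : ∀ k ∈ Icc 1 (N - 1), ξ k = (dft N p k + I * om N k * dft N q k) / √(2 * om N k))
    (hη : ∀ k ∈ Icc 1 (N - 1),
      η k = (dft N p ((N : ℤ) - k) - I * om N k * dft N q ((N : ℤ) - k)) / √(2 * om N k))
    {j : ℕ} (hj : j < N) :
    bondPoly N (Icc 1 (N - 1)) (fun k ↦ k) (fun k ↦ √(om N k) * ξ k) j +
        bondPoly N (Icc 1 (N - 1)) (-fun k : ℕ ↦ (k : ℤ)) (fun k ↦ √(om N k) * η k) j =
      √(2 * N) * (q j - q ((j + 1) % N)) := by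
  have htwo : (√2 : ℂ) * √2 = 2 := mod_cast Real.mul_self_sqrt zero_le_two
  rw [bondPoly_neg_natCast_Icc, Real.sqrt_mul zero_le_two, ofReal_mul, mul_assoc,
    ← bondPoly_I_mul_om_mul_dft q hj]
  simp_rw [bondPoly, mul_sum, ← sub_eq_add_neg, ← sum_sub_distrib]
  refine sum_congr rfl fun k hk ↦ ?_
  obtain ⟨hk_refl, hkN⟩ : N - k ∈ Icc 1 (N - 1) ∧ k ≤ N := by grind
  have hξk : (√2 : ℂ) * (√(om N k) * ξ k) = dft N p k + I * om N k * dft N q k := by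
    rw [hξ k hk, sqrt_two_mul_sqrt_mul_div (om_pos hk)]
  have hηk : (√2 : ℂ) * (√(om N (N - k)) * η (N - k)) =
      dft N p k - I * om N k * dft N q k := by
    rw [hη _ hk_refl, sqrt_two_mul_sqrt_mul_div (om_pos hk_refl), om_sub hkN, Nat.cast_sub hkN,
      sub_sub_cancel]
  have htwo_ne : (√2 : ℂ) ≠ 0 := left_ne_zero_of_mul (htwo ▸ two_ne_zero)
  apply mul_left_cancel₀ htwo_ne
  linear_combination bondChar N k j * (hξk - hηk - I * om N k * dft N q k * htwo)

lemma sum_sub_cube_eq_sum_bondPoly_cube {p q ξ η : ℕ → ℂ}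
    (hξ : ∀ k ∈ Icc 1 (N - 1), ξ k = (dft N p k + I * om N k * dft N q k) / √(2 * om N k))
    (hη : ∀ k ∈ Icc 1 (N - 1),
      η k = (dft N p ((N : ℤ) - k) - I * om N k * dft N q ((N : ℤ) - k)) / √(2 * om N k)) :
    2 * (N : ℂ) * √(2 * N) * ∑ j ∈ range N, (q j - q ((j + 1) % N)) ^ 3 =
      ∑ j ∈ range N,
        (bondPoly N (Icc 1 (N - 1)) (fun k ↦ k) (fun k ↦ √(om N k) * ξ k) j +
          bondPoly N (Icc 1 (N - 1)) (-fun k : ℕ ↦ (k : ℤ)) (fun k ↦ √(om N k) * η k) j) ^ 3 := by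
  have hsq : (√(2 * N) : ℂ) ^ 2 = 2 * N := mod_cast Real.sq_sqrt (by positivity)
  rw [← hsq, ← pow_succ, mul_sum]
  refine sum_congr rfl fun j hj ↦ ?_
  rw [← mul_pow, bondPoly_add_bondPoly_neg_eq_sqrt_mul_sub hξ hη (mem_range.mp hj)]

end NormalModes

/-- expression of the cubic part `H₁ = (1/6)Σ(q_j−q_{j+1})³` of the Toda
Hamiltonian in the linear complex Birkhoff variables
`ξ_k = (p̂_k + iω_k q̂_k)/√(2ω_k)`, `η_k = (p̂_{N−k} − iω_k q̂_{N−k})/√(2ω_k)`. -/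
theorem stmt_11 (N : ℕ) (hN : 2 ≤ N) (p q : ℕ → ℂ) (ξ η : ℕ → ℂ)
    (hξ : ∀ k ∈ Finset.Icc 1 (N - 1),
      ξ k = (dft N p k + Complex.I * om N k * dft N q k) / (Real.sqrt (2 * om N k) : ℂ))
    (hη : ∀ k ∈ Finset.Icc 1 (N - 1),
      η k = (dft N p ((N : ℤ) - k) - Complex.I * om N k * dft N q ((N : ℤ) - k)) /
        (Real.sqrt (2 * om N k) : ℂ)) :
    (1 / 6 : ℂ) * ∑ j ∈ Finset.range N, (q j - q ((j + 1) % N)) ^ 3 =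
      (1 / (12 * (Real.sqrt (2 * N) : ℂ))) *
        ((∑ k₁ ∈ Finset.Icc 1 (N - 1), ∑ k₂ ∈ Finset.Icc 1 (N - 1),
            ∑ k₃ ∈ Finset.Icc 1 (N - 1),
              if (k₁ + k₂ + k₃) % N = 0 then
                (-1 : ℂ) ^ ((k₁ + k₂ + k₃) / N) *
                  (Real.sqrt (om N k₁) : ℂ) * (Real.sqrt (om N k₂) : ℂ) *
                    (Real.sqrt (om N k₃) : ℂ) *
                  (ξ k₁ * ξ k₂ * ξ k₃ + η k₁ * η k₂ * η k₃)
              else 0) +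
          3 * ∑ k₁ ∈ Finset.Icc 1 (N - 1), ∑ k₂ ∈ Finset.Icc 1 (N - 1),
            ∑ k₃ ∈ Finset.Icc 1 (N - 1),
              if ((k₁ : ℤ) + k₂ - k₃) % (N : ℤ) = 0 then
                (-1 : ℂ) ^ (((k₁ : ℤ) + k₂ - k₃) / (N : ℤ)) *
                  (Real.sqrt (om N k₁) : ℂ) * (Real.sqrt (om N k₂) : ℂ) *
                    (Real.sqrt (om N k₃) : ℂ) *
                  (ξ k₁ * ξ k₂ * η k₃ + η k₁ * η k₂ * ξ k₃)
              else 0) := by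
  have : NeZero N := ⟨by omega⟩
  have hN_ne : (N : ℂ) ≠ 0 := NeZero.ne _
  have hsqrt_ne : (√(2 * N) : ℂ) ≠ 0 := mod_cast (by positivity : √(2 * N) ≠ 0)
  have hcube := sum_sub_cube_eq_sum_bondPoly_cube hξ hη
  have hfactor (z s₁ s₂ s₃ x₁ x₂ x₃ y₁ y₂ y₃ : ℂ) :
      z * (s₁ * x₁ * (s₂ * x₂) * (s₃ * x₃) + s₁ * y₁ * (s₂ * y₂) * (s₃ * y₃)) =
        z * s₁ * s₂ * s₃ * (x₁ * x₂ * x₃ + y₁ * y₂ * y₃) := by ring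
  simp only [sum_bondPoly_add_bondPoly_neg_cube, hfactor, ← Nat.cast_add, ← Int.natCast_mod,
    ← Int.natCast_div, zpow_natCast, Int.natCast_eq_zero] at hcube
  simp only [← Nat.cast_add]
  rw [one_div_mul_eq_div (12 * _), eq_div_iff (mul_ne_zero (by norm_num) hsqrt_ne)]
  apply mul_left_cancel₀ hN_ne
  linear_combination hcube
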